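/- For all integers d ≥ 1 and r ≥ 0, the number of balanced shifted tableaux of shape Z(d,r) equals the number of reduced words of w^{(d,r)}: |BS(Z(d,r))| = |Red(w^{(d,r)})|. -/

import Mathlib

open scoped BigOperators

namespace BST

/-- `lam` (1-indexed, with `d` parts) is a strict partition: strictly decreasing
positive parts `lam 1 > lam 2 > ⋯ > lam d > 0`. -/
def IsStrictPartition (d : ℕ) (lam : ℕ → ℕ) : Prop :=
  (∀ i : ℕ, 1 ≤ i → i < d → lam (i + 1) < lam i) ∧ 1 ≤ lam d

/-- The size `|λ| = λ_1 + ⋯ + λ_d`. -/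
def sizeP (d : ℕ) (lam : ℕ → ℕ) : ℕ := ∑ i ∈ Finset.Icc 1 d, lam i

/-- The shifted diagram `D(λ) ⊆ ℤ × ℤ`: row `i` (1 ≤ i ≤ d) occupies columns
`i - d, …, λ_i + i - d - 1`. -/
def Diagram (d : ℕ) (lam : ℕ → ℕ) : Set (ℤ × ℤ) :=
  {p : ℤ × ℤ | 1 ≤ p.1 ∧ p.1 ≤ (d : ℤ) ∧ p.1 - (d : ℤ) ≤ p.2 ∧
    p.2 + (d : ℤ) + 1 ≤ (lam p.1.toNat : ℤ) + p.1}

/-- The hook `H(i,c)`. -/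
def Hook (d : ℕ) (lam : ℕ → ℕ) (i c : ℤ) : Set (ℤ × ℤ) :=
  {(i, c)} ∪ {p ∈ Diagram d lam | (p.1 = i ∧ c < p.2) ∨ (p.2 = c ∧ i < p.1)} ∪
    {p ∈ Diagram d lam | c < 0 ∧ p.1 = (d : ℤ) + 1 + c}

/-- The extended hook `H̃(i,c)`. -/
def ExtHook (d : ℕ) (lam : ℕ → ℕ) (i c : ℤ) : Set (ℤ × ℤ) :=
  Hook d lam i c ∪ {p : ℤ × ℤ | c < 0 ∧ p = ((d : ℤ) + 1 + c, c)}

/-- The extended diagram `D(λ) ∪ {(i, i - d - 1) : 1 ≤ i ≤ d}`. -/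
def ExtDiagram (d : ℕ) (lam : ℕ → ℕ) : Set (ℤ × ℤ) :=
  Diagram d lam ∪ {p : ℤ × ℤ | 1 ≤ p.1 ∧ p.1 ≤ (d : ℤ) ∧ p.2 = p.1 - ((d : ℤ) + 1)}

/-- The extended filling `B̃`, with `B̃(i, i - d - 1) = B(i, 0)`. -/
def ExtFilling (d : ℕ) (B : ℤ × ℤ → ℕ) : ℤ × ℤ → ℕ :=
  fun p => if p.2 = p.1 - ((d : ℤ) + 1) then B (p.1, 0) else B p

/-- The rank function `rk(i,c)`. -/
def rk (d : ℕ) (lam : ℕ → ℕ) (i c : ℤ) : ℤ :=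
  if 0 ≤ c then (lam i.toNat : ℤ) - d + i - c
  else (lam i.toNat : ℤ) - d + i + (lam ((d : ℤ) + 1 + c).toNat : ℤ) + c + 1

/-- A bijective filling of `D(λ)` with `1, …, |λ|` (normalized to be `0` off the diagram). -/
def IsFilling (d : ℕ) (lam : ℕ → ℕ) (B : ℤ × ℤ → ℕ) : Prop :=
  Set.BijOn B (Diagram d lam) (Set.Icc 1 (sizeP d lam)) ∧
    ∀ p : ℤ × ℤ, p ∉ Diagram d lam → B p = 0

/-- A balanced shifted tableau: a bijective filling such that at each box `(i,c)`,
`B(i,c)` is the `rk(i,c)`-th largest entry of the multiset of values of `B̃` on the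
extended hook, i.e. exactly `rk(i,c) - 1` boxes of the extended hook carry a value
strictly larger than `B(i,c)`. -/
def IsBalanced (d : ℕ) (lam : ℕ → ℕ) (B : ℤ × ℤ → ℕ) : Prop :=
  IsFilling d lam B ∧ ∀ p ∈ Diagram d lam,
    ({q ∈ ExtHook d lam p.1 p.2 | B p < ExtFilling d B q}.ncard : ℤ) =
      rk d lam p.1 p.2 - 1

/-- A standard Young tableau of shifted shape `λ`. -/
def IsSYT (d : ℕ) (lam : ℕ → ℕ) (B : ℤ × ℤ → ℕ) : Prop :=
  IsFilling d lam B ∧ ∀ p ∈ Diagram d lam, ∀ q ∈ Diagram d lam,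
    ((p.1 = q.1 ∧ p.2 < q.2) → B p < B q) ∧ ((p.2 = q.2 ∧ p.1 < q.1) → B p < B q)

/-- The simple reflections of `W(B_n)`, acting on `ℤ`: `s 0` swaps `1 ↔ -1`,
and `s a` (for `a ≥ 1`) swaps `a ↔ a+1` and `-a ↔ -(a+1)`. -/
def sB (a : ℕ) : Equiv.Perm ℤ :=
  if a = 0 then Equiv.swap 1 (-1)
  else Equiv.swap (a : ℤ) ((a : ℤ) + 1) * Equiv.swap (-(a : ℤ)) (-(a : ℤ) - 1)

/-- The product `s_{a_1} s_{a_2} ⋯ s_{a_m}` of a word. -/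
def wordProd (L : List ℕ) : Equiv.Perm ℤ := (L.map sB).prod

/-- A signed permutation in `W(B_n)`: odd, and the identity beyond `n`. -/
def IsSignedPerm (n : ℕ) (w : Equiv.Perm ℤ) : Prop :=
  (∀ i : ℤ, w (-i) = -(w i)) ∧ ∀ i : ℤ, (n : ℤ) < |i| → w i = i

/-- The Coxeter length of `w` in `W(B_n)`. -/
noncomputable def lengthB (n : ℕ) (w : Equiv.Perm ℤ) : ℕ :=
  sInf {m : ℕ | ∃ L : List ℕ, (∀ a ∈ L, a < n) ∧ wordProd L = w ∧ L.length = m}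

/-- `L` is a reduced word of `w` in `W(B_n)`. -/
def IsReducedWord (n : ℕ) (w : Equiv.Perm ℤ) (L : List ℕ) : Prop :=
  (∀ a ∈ L, a < n) ∧ wordProd L = w ∧ L.length = lengthB n w

/-- The vector `e_k` (for `k ≥ 1` the `k`-th standard basis vector, with the
conventions `e 0 = 0` and `e (-k) = - e k`), represented as an odd function `ℤ → ℤ`. -/
def eVec (k : ℤ) : ℤ → ℤ :=
  fun t => if t = 0 then 0 else if t = k then 1 else if t = -k then -1 else 0

/-- The positive roots of type `B_n`. -/
def PosRoots (n : ℕ) : Set (ℤ → ℤ) :=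
  {v | (∃ i j : ℤ, 1 ≤ i ∧ i < j ∧ j ≤ (n : ℤ) ∧
        (v = eVec j - eVec i ∨ v = eVec j + eVec i)) ∨
       (∃ i : ℤ, 1 ≤ i ∧ i ≤ (n : ℤ) ∧ v = eVec i)}

/-- The action of a signed permutation on vectors: `w · e_i = e_{w(i)}`. -/
def actB (w : Equiv.Perm ℤ) (v : ℤ → ℤ) : ℤ → ℤ := fun t => v (w⁻¹ t)

/-- The inversion set `Inv(w) = {α ∈ Φ⁺ : w⁻¹ · α ∈ -Φ⁺}`. -/
def InvSet (n : ℕ) (w : Equiv.Perm ℤ) : Set (ℤ → ℤ) :=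
  {α | α ∈ PosRoots n ∧ -(actB w⁻¹ α) ∈ PosRoots n}

/-- The simple roots: `α_0 = e_1` and `α_a = e_{a+1} - e_a` for `a ≥ 1`. -/
def alphaRoot (a : ℕ) : ℤ → ℤ :=
  if a = 0 then eVec 1 else eVec ((a : ℤ) + 1) - eVec (a : ℤ)

/-- The reflection order of a word: `reflOrder L t = γ_{t+1} = s_{a_1} ⋯ s_{a_t} · α_{a_{t+1}}`
(0-indexed). -/
def reflOrder (L : List ℕ) (t : ℕ) : ℤ → ℤ :=
  actB (wordProd (L.take t)) (alphaRoot (L.getD t 0))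

/-- The trapezoid `Z(d,r) = (r+2d-1, r+2d-3, …, r+1)`. -/
def Zlam (d r : ℕ) : ℕ → ℕ := fun i => r + 2 * d + 1 - 2 * i

/-- The labeling `f : D(Z(d,r)) → Φ⁺`. -/
def fLabel (d r : ℕ) (p : ℤ × ℤ) : ℤ → ℤ :=
  if p.2 ≤ 0 then eVec ((d : ℤ) + 1 - p.1) - eVec p.2
  else if p.2 ≤ (r : ℤ) then eVec ((d : ℤ) + 1 - p.1) + eVec (p.2 + (d : ℤ))
  else eVec ((d : ℤ) + 1 - p.1) - eVec (p.2 - (r : ℤ))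

/-- The extended labeling `f̃`, with `f̃(i, i - d - 1) = 2 e_{d+1-i}`. -/
def fExtLabel (d r : ℕ) (p : ℤ × ℤ) : ℤ → ℤ :=
  if p.2 = p.1 - ((d : ℤ) + 1) then (2 : ℤ) • eVec ((d : ℤ) + 1 - p.1)
  else fLabel d r p

/-- `w` is the signed permutation `w^{(d,r)} ∈ W(B_{d+r})`, i.e.
`w(i) = d + i` for `1 ≤ i ≤ r` and `w(i) = -(i - r)` for `r < i ≤ d + r`. -/
def IsWdr (d r : ℕ) (w : Equiv.Perm ℤ) : Prop :=
  IsSignedPerm (d + r) w ∧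
    (∀ i : ℤ, 1 ≤ i → i ≤ (r : ℤ) → w i = (d : ℤ) + i) ∧
    (∀ i : ℤ, (r : ℤ) < i → i ≤ (d : ℤ) + (r : ℤ) → w i = -(i - r))


/-- `x` lies strictly between `y` and `z` (i.e. `min(y,z) < x < max(y,z)`). -/
def Between (x y z : ℕ) : Prop := (y < x ∧ x < z) ∨ (z < x ∧ x < y)

/-- A nonempty list is unimodal: strictly decreasing down to its minimum
(at 0-indexed position `k`), then strictly increasing. -/
def Unimodal (L : List ℕ) : Prop :=
  ∃ k : ℕ, k < L.length ∧
    (∀ a b : ℕ, a < b → b ≤ k → L.getD b 0 < L.getD a 0) ∧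
    (∀ a b : ℕ, k ≤ a → a < b → b < L.length → L.getD a 0 < L.getD b 0)

/-- Row `i` of the distinguished tableau of shape `Z(d,r)`:
`(r+d-i, …, r+1, 0, 1, …, r+d-i)`. -/
def rowWord (d r i : ℕ) : List ℕ :=
  (List.range (r + 2 * (d - i) + 1)).map fun t =>
    if t < d - i then r + (d - i) - t else t - (d - i)

/-- The reading word `π(T) = T_d T_{d-1} ⋯ T_1` of the distinguished tableau of
shape `Z(d,r)`. -/
def piWord (d r : ℕ) : List ℕ :=
  (List.range d).flatMap fun k => rowWord d r (d - k)

/-- `μ_i = Z(d,r)_i - λ_i`. -/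
def muF (d r : ℕ) (lam : ℕ → ℕ) (i : ℕ) : ℕ := r + 2 * d + 1 - 2 * i - lam i

/-- `σ_i = μ_1 + ⋯ + μ_i`. -/
def sigmaF (d r : ℕ) (lam : ℕ → ℕ) (i : ℕ) : ℕ := ∑ t ∈ Finset.Icc 1 i, muF d r lam t

/-- `ν_i = min{μ_i, …, μ_d}`. -/
noncomputable def nuF (d r : ℕ) (lam : ℕ → ℕ) (i : ℕ) : ℕ :=
  sInf {m : ℕ | ∃ j : ℕ, i ≤ j ∧ j ≤ d ∧ m = muF d r lam j}

/-- The word `a^λ`: the concatenation over `i = 1, …, d` of the increasing runs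
`(d+r-i-μ_i+1, …, d+r-i)`. -/
def aLamWord (d r : ℕ) (lam : ℕ → ℕ) : List ℕ :=
  (List.range d).flatMap fun k =>
    (List.range (muF d r lam (k + 1))).map fun t =>
      d + r - (k + 1) - muF d r lam (k + 1) + 1 + t

/-- Row `i` of the tableau `P(w^λ)`: entries `P(i,c) = c` for `c ≥ 0` and
`P(i,c) = r - c - ν_{d+1+c}` for `c < 0`. -/
noncomputable def rowWordP (d r : ℕ) (lam : ℕ → ℕ) (i : ℕ) : List ℕ :=
  (List.range (lam i)).map fun t =>
    if t < d - i then r + (d - i) - t - nuF d r lam (i + 1 + t) else t - (d - i)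

/-- The reading word `π(P(w^λ))`. -/
noncomputable def piWordP (d r : ℕ) (lam : ℕ → ℕ) : List ℕ :=
  (List.range d).flatMap fun k => rowWordP d r lam (d - k)

/-- The shape obtained from `λ` by adding one box at the end of row `i`. -/
def stepShape (lam : ℕ → ℕ) (i : ℕ) : ℕ → ℕ :=
  fun t => if t = i then lam i + 1 else lam t

/-- The box-adding map `f_i` on fillings: swap columns `j = λ_i + i - d` and `j + 1`
(in rows `1, …, i-1`), and put the value `N + 1` in the new box `(i, j)`. -/
def addBox (d : ℕ) (lam : ℕ → ℕ) (i : ℕ) (N : ℕ) (B : ℤ × ℤ → ℕ) : ℤ × ℤ → ℕ :=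
  fun p =>
    if p = ((i : ℤ), (lam i : ℤ) + (i : ℤ) - (d : ℤ)) then N + 1
    else if 1 ≤ p.1 ∧ p.1 < (i : ℤ) ∧ p.2 = (lam i : ℤ) + (i : ℤ) - (d : ℤ) then
      B (p.1, p.2 + 1)
    else if 1 ≤ p.1 ∧ p.1 < (i : ℤ) ∧ p.2 = (lam i : ℤ) + (i : ℤ) - (d : ℤ) + 1 then
      B (p.1, p.2 - 1)
    else B p

/-- Successively apply the box-adding maps along a list of row indices,
tracking the current shape. -/
def FmapAux (d : ℕ) : List ℕ → (ℕ → ℕ) → (ℤ × ℤ → ℕ) → (ℤ × ℤ → ℕ)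
  | [], _, B => B
  | i :: rest, lam, B => FmapAux d rest (stepShape lam i) (addBox d lam i (sizeP d lam) B)

/-- The shape after successively adding boxes along a list of row indices. -/
def shapeAux : List ℕ → (ℕ → ℕ) → (ℕ → ℕ)
  | [], lam => lam
  | i :: rest, lam => shapeAux rest (stepShape lam i)

/-- The list of row indices `1^{μ_1} 2^{μ_2} ⋯ d^{μ_d}` used to pad `λ` to `Z(d,r)`. -/
def rowsList (d r : ℕ) (lam : ℕ → ℕ) : List ℕ :=
  (List.range d).flatMap fun k => List.replicate (muF d r lam (k + 1)) (k + 1)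

/-- `BS(Z(d,r))|_λ`: balanced tableaux of shape `Z(d,r)` such that for each
`i ∈ {1,…,d}` the entries `N + σ_{i-1} + 1, …, N + σ_i` all occur in row `i`. -/
def BSRestricted (d r : ℕ) (lam : ℕ → ℕ) : Set (ℤ × ℤ → ℕ) :=
  {T | IsBalanced d (Zlam d r) T ∧ ∀ i : ℕ, 1 ≤ i → i ≤ d →
    ∀ k : ℕ, sizeP d lam + sigmaF d r lam (i - 1) + 1 ≤ k →
      k ≤ sizeP d lam + sigmaF d r lam i →
      ∃ c : ℤ, ((i : ℤ), c) ∈ Diagram d (Zlam d r) ∧ T ((i : ℤ), c) = k}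

/-- `w ∈ W(B_n)` pattern embeds the signed pattern `v` (given as its one-line
notation, a list of nonzero integers). -/
def PatternEmbeds (n : ℕ) (w : Equiv.Perm ℤ) (v : List ℤ) : Prop :=
  ∃ idx : Fin v.length → ℤ, StrictMono idx ∧
    (∀ j, 1 ≤ idx j ∧ idx j ≤ (n : ℤ)) ∧
    (∀ j, 0 < w (idx j) ↔ 0 < v.get j) ∧
    (∀ j k, |w (idx j)| < |w (idx k)| ↔ |v.get j| < |v.get k|)

/-!
Encode the positive roots of type `B`, up to scaling, by the pairs `(i, k)` with `-k < i < k`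
standing for `e_k - e_i`. The boxes of the trapezoid `Z(d, r)` then become the inversions of
`w^{(d,r)}`, and the extended hook of a box becomes the inversions occurring in decompositions of
the corresponding root `α` as a sum of two roots, the extra boxes accounting for those which involve
a long multiple `2 e_k`. So a balanced tableau is a bijective labelling of the inversions such that,
at each `α`, the number of larger labels equals the number of intermediate positions `i < j < k`,
that is, of decompositions of `e_k - e_i`.

For any signed permutation `w`, such labellings correspond to reduced words. The balance conditions
force the smallest label to sit on an inversion whose two values under `w` are adjacent, which is
the inversion removed by a left descent `s_a`. Deleting that label leaves a balanced labelling of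
the inversions of `s_a w`, and this step can be reversed, just as removing the first letter `a`
of a reduced word of `w` leaves a reduced word of `s_a w`.
-/

section BijOn

variable {α β M : Type*}

theorem lt_of_bijOn_Ico {g : α → ℕ} {s : Set α} {m b : ℕ}
    (hg : Set.BijOn g s (Set.Ico m b)) {p q : α} (hp : p ∈ s) (hpm : g p = m) (hq : q ∈ s)
    (hqp : q ≠ p) : g p < g q := by
  refine lt_of_le_of_ne ?_ fun h => hqp (hg.injOn hq hp h.symm)
  rw [hpm]
  exact (hg.mapsTo hq).1

theorem ncard_sep_of_bijOn {e : α → β} {s : Set α} {t : Set β}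
    (he : Set.BijOn e s t) (P : β → Prop) : {b ∈ t | P b}.ncard = {a ∈ s | P (e a)}.ncard := by
  rw [← (he.injOn.mono (Set.sep_subset s fun a => P (e a))).ncard_image]
  congr 1
  ext b
  constructor
  · rintro ⟨hb, hP⟩
    obtain ⟨a, ha, rfl⟩ := he.surjOn hb
    exact ⟨a, ⟨ha, hP⟩, rfl⟩
  · rintro ⟨a, ⟨ha, hP⟩, rfl⟩
    exact ⟨he.mapsTo ha, hP⟩

theorem indicator_comp_indicator_comp [Zero M] {e : α → β} {e' : β → α}
    {s : Set α} {t : Set β} (hmaps : Set.MapsTo e s t) (hinv : Set.LeftInvOn e' e s) {g : α → M}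
    (hg : ∀ a ∉ s, g a = 0) : s.indicator (t.indicator (g ∘ e') ∘ e) = g := by
  funext a
  by_cases ha : a ∈ s
  · rw [Set.indicator_of_mem ha, Function.comp_apply, Set.indicator_of_mem (hmaps ha),
      Function.comp_apply, hinv ha]
  · rw [Set.indicator_of_notMem ha, hg a ha]

end BijOn

section Roots

/-- The positive root of type `B` proportional to `e_k - e_i` (with `e_0 = 0` and
`e_{-j} = -e_j`), for `i < k`. It is encoded by the pair `(i, k)` with `-k < i < k` among those
giving the same reflection: `(i, k)` and `(-k, -i)` name the same root, and so do `(-k, k)` (which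
gives `2 e_k`) and `(0, k)`. -/
def root (i k : ℤ) : ℤ × ℤ :=
  if 0 < i + k then (i, k) else if i + k < 0 then (-k, -i) else (0, k)

theorem root_eq_mk {i k : ℤ} (h : -k < i) : root i k = (i, k) :=
  if_pos (by omega)

theorem root_neg_neg (i k : ℤ) : root (-k) (-i) = root i k := by
  grind [root]

/-- The inversions of a signed permutation `w`, as encoded by `root`: the positive roots that `w`
makes negative. -/
def inversions (w : Equiv.Perm ℤ) : Set (ℤ × ℤ) :=
  {q | -q.2 < q.1 ∧ q.1 < q.2 ∧ w q.2 < w q.1}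

variable {w : Equiv.Perm ℤ}

theorem root_mem_inversions (hw : Function.Odd w) {i k : ℤ} (hik : i < k) :
    root i k ∈ inversions w ↔ w k < w i := by
  have hi := hw i
  have hk := hw k
  have h0 := hw.map_zero
  unfold root inversions
  split_ifs with hpos hneg
  · simp only [Set.mem_ofPred_eq]
    omega
  · simp only [Set.mem_ofPred_eq]
    omega
  · obtain rfl : i = -k := by omega
    simp only [Set.mem_ofPred_eq]
    omega

theorem odd_inv (hw : Function.Odd w) : Function.Odd ⇑w⁻¹ := fun t =>
  Equiv.Perm.inv_eq_iff_eq.2 (by rw [hw]; simp)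

theorem inversions_one : inversions 1 = ∅ :=
  Set.eq_empty_of_forall_notMem fun _ hq => hq.2.1.not_gt hq.2.2

theorem IsSignedPerm.apply_eq_self_of_lt_abs {n : ℕ} (hw : IsSignedPerm n w) {i : ℤ}
    (hi : (n : ℤ) < |w i|) : w i = i :=
  w.injective (hw.2 _ hi)

theorem IsSignedPerm.finite_inversions {n : ℕ} (hw : IsSignedPerm n w) :
    (inversions w).Finite := by
  refine ((Set.finite_Icc (-(n : ℤ)) n).prod (Set.finite_Icc (-(n : ℤ)) n)).subset ?_
  rintro ⟨i, k⟩ ⟨hneg : -k < i, hik : i < k, hlt : w k < w i⟩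
  have hk : k ≤ n := by
    by_contra! hnk
    rw [hw.2 k (by rwa [abs_of_pos (by omega)])] at hlt
    have hi := hw.apply_eq_self_of_lt_abs (hnk.trans (hlt.trans_le (le_abs_self _)))
    omega
  simp only [Set.mem_prod, Set.mem_Icc]
  omega

end Roots

section Generators

theorem sB_apply (a : ℕ) (t : ℤ) :
    sB a t = if a = 0 then (if t = 1 then -1 else if t = -1 then 1 else t)
      else if t = a then a + 1 else if t = a + 1 then a
      else if t = -a then -a - 1 else if t = -a - 1 then -a else t := by
  unfold sB
  by_cases ha : a = 0
  · simp [ha, Equiv.swap_apply_def]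
  · simp only [ha, if_false, Equiv.Perm.mul_apply, Equiv.swap_apply_def]
    split_ifs <;> omega

theorem sB_sB_apply (a : ℕ) (t : ℤ) : sB a (sB a t) = t := by
  have h := sB_apply a t
  rw [sB_apply a (sB a t)]
  split_ifs at h ⊢ <;> omega

theorem sB_mul_cancel_left (a : ℕ) (w : Equiv.Perm ℤ) : sB a * (sB a * w) = w :=
  Equiv.ext fun t => sB_sB_apply a (w t)

theorem odd_sB (a : ℕ) : Function.Odd (sB a) := fun t => by
  simp only [sB_apply]
  split_ifs <;> omega

theorem isSignedPerm_sB {n a : ℕ} (ha : a < n) : IsSignedPerm n (sB a) :=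
  ⟨odd_sB a, fun t ht => by
    rw [lt_abs] at ht
    rw [sB_apply]
    split_ifs <;> omega⟩

theorem isSignedPerm_one (n : ℕ) : IsSignedPerm n 1 :=
  ⟨fun _ => rfl, fun _ _ => rfl⟩

theorem IsSignedPerm.mul {n : ℕ} {u v : Equiv.Perm ℤ} (hu : IsSignedPerm n u)
    (hv : IsSignedPerm n v) : IsSignedPerm n (u * v) :=
  ⟨fun i => by rw [Equiv.Perm.mul_apply, hv.1, hu.1, Equiv.Perm.mul_apply],
    fun i hi => by rw [Equiv.Perm.mul_apply, hv.2 i hi, hu.2 i hi]⟩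

/-- The simple root `e_{a+1} - e_a`. -/
def simpleRoot (a : ℕ) : ℤ × ℤ :=
  (a, a + 1)

theorem root_eq_simpleRoot_iff {a : ℕ} {u v : ℤ} (huv : u < v) :
    root u v = simpleRoot a ↔
      u = a ∧ v = a + 1 ∨ u = -a - 1 ∧ v = -a ∨ a = 0 ∧ u = -1 ∧ v = 1 := by
  unfold root simpleRoot
  split_ifs <;> simp only [Prod.mk.injEq] <;> omega

theorem sB_lt_sB_iff {a : ℕ} {u v : ℤ} (huv : u < v) :
    sB a u < sB a v ↔ root u v ≠ simpleRoot a := by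
  rw [Ne, root_eq_simpleRoot_iff huv, sB_apply, sB_apply]
  split_ifs <;> omega

end Generators

section Descents

variable {n a b : ℕ} {w : Equiv.Perm ℤ}

/-- `a` is a left descent of `w`, i.e. `s_a w` is shorter than `w`. This is expressed by `w⁻¹`
making the simple root `e_{a+1} - e_a` negative. -/
def IsDescent (w : Equiv.Perm ℤ) (a : ℕ) : Prop :=
  w⁻¹ (a + 1) < w⁻¹ a

/-- The positive root whose reflection `t` satisfies `s_a w = w t`. It is the inversion that `w`
loses on passing to `s_a w` at a descent `a`. -/
def descentRoot (w : Equiv.Perm ℤ) (a : ℕ) : ℤ × ℤ :=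
  root (w⁻¹ (a + 1)) (w⁻¹ a)

theorem IsDescent.root_eq_descentRoot_iff (hw : Function.Odd w) (ha : IsDescent w a) {i k : ℤ}
    (hik : i < k) (hlt : w k < w i) :
    root i k = descentRoot w a ↔ root (w k) (w i) = simpleRoot a := by
  have hinv := odd_inv hw
  have eq_iff (s t : ℤ) : w s = t ↔ s = w⁻¹ t := Equiv.Perm.eq_inv_iff_eq.symm
  have hne : w⁻¹ (a + 1) ≠ 0 := fun h => by
    rw [Equiv.Perm.inv_eq_iff_eq, hw.map_zero] at h
    omega
  have hne' : w⁻¹ (a + 1) ≠ -w⁻¹ a := fun h => by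
    rw [← hinv, w⁻¹.injective.eq_iff] at h
    omega
  have hzero : w⁻¹ a = 0 ↔ a = 0 := by
    rw [Equiv.Perm.inv_eq_iff_eq, hw.map_zero, Nat.cast_eq_zero]
  have hone : a = 0 → w⁻¹ 1 = w⁻¹ (a + 1) := by
    rintro rfl
    simp
  rw [root_eq_simpleRoot_iff hlt, eq_iff, eq_iff, eq_iff, eq_iff, eq_iff, eq_iff,
    show -(a : ℤ) - 1 = -(a + 1) by ring, hinv, hinv, hinv]
  unfold IsDescent at ha
  unfold descentRoot root
  generalize w⁻¹ (a + 1) = I at *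
  generalize w⁻¹ a = K at *
  split_ifs <;> simp only [Prod.mk.injEq] <;> omega

theorem IsDescent.root_ne_simpleRoot (hw : Function.Odd w) (ha : IsDescent w a) {i k : ℤ}
    (hik : i < k) (hlt : w i < w k) : root (w i) (w k) ≠ simpleRoot a := by
  have eq_inv {s t : ℤ} (h : w s = t) : s = w⁻¹ t := Equiv.Perm.eq_inv_iff_eq.mpr h
  have hinv := odd_inv hw
  unfold IsDescent at ha
  rw [Ne, root_eq_simpleRoot_iff hlt, show -(a : ℤ) - 1 = -(a + 1) by ring]
  rintro (⟨hi, hk⟩ | ⟨hi, hk⟩ | ⟨rfl, hi, hk⟩) <;>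
    have hi' := eq_inv hi <;> have hk' := eq_inv hk
  · omega
  · rw [hinv] at hi' hk'
    omega
  · rw [hinv] at hi'
    rw [Nat.cast_zero, zero_add, hinv.map_zero] at ha
    omega

theorem IsDescent.sB_mul_apply_lt_iff (hw : Function.Odd w) (ha : IsDescent w a) {i k : ℤ}
    (hik : i < k) :
    (sB a * w) k < (sB a * w) i ↔ w k < w i ∧ root i k ≠ descentRoot w a := by
  rw [Equiv.Perm.mul_apply, Equiv.Perm.mul_apply]
  rcases lt_or_gt_of_ne (w.injective.ne hik.ne) with hlt | hlt
  · have h := (sB_lt_sB_iff hlt).2 (ha.root_ne_simpleRoot hw hik hlt)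
    exact iff_of_false h.not_gt fun h' => hlt.not_gt h'.1
  · rw [sB_lt_sB_iff hlt, Ne, Ne, ha.root_eq_descentRoot_iff hw hik hlt]
    exact (and_iff_right hlt).symm

theorem IsDescent.mem_inversions_sB_mul_iff (hw : Function.Odd w) (ha : IsDescent w a)
    {q : ℤ × ℤ} : q ∈ inversions (sB a * w) ↔ q ∈ inversions w ∧ q ≠ descentRoot w a := by
  unfold inversions
  simp only [Set.mem_ofPred_eq]
  constructor
  · rintro ⟨h₁, h₂, h₃⟩
    rw [ha.sB_mul_apply_lt_iff hw h₂, root_eq_mk h₁] at h₃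
    exact ⟨⟨h₁, h₂, h₃.1⟩, h₃.2⟩
  · rintro ⟨⟨h₁, h₂, h₃⟩, h₄⟩
    refine ⟨h₁, h₂, ?_⟩
    rw [ha.sB_mul_apply_lt_iff hw h₂, root_eq_mk h₁]
    exact ⟨h₃, h₄⟩

theorem IsDescent.descentRoot_mem_inversions (hw : Function.Odd w) (ha : IsDescent w a) :
    descentRoot w a ∈ inversions w := by
  rw [descentRoot, root_mem_inversions hw ha]
  simp

theorem IsDescent.descentRoot_notMem_inversions (hw : Function.Odd w) (ha : IsDescent w a) :
    descentRoot w a ∉ inversions (sB a * w) := fun h =>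
  ((ha.mem_inversions_sB_mul_iff hw).1 h).2 rfl

theorem IsDescent.inversions_eq_insert (hw : Function.Odd w) (ha : IsDescent w a) :
    inversions w = insert (descentRoot w a) (inversions (sB a * w)) := by
  ext q
  rw [Set.mem_insert_iff, ha.mem_inversions_sB_mul_iff hw]
  by_cases hq : q = descentRoot w a
  · simp [hq, ha.descentRoot_mem_inversions hw]
  · simp [hq]

theorem isDescent_or_isDescent_sB_mul (hw : Function.Odd w) (a : ℕ) :
    IsDescent w a ∨ IsDescent (sB a * w) a := by
  have hinv (t : ℤ) : (sB a * w)⁻¹ t = w⁻¹ (sB a t) :=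
    Equiv.Perm.inv_eq_iff_eq.2 (by simp [sB_sB_apply])
  have hne : w⁻¹ (a + 1) ≠ w⁻¹ a := w⁻¹.injective.ne (by omega)
  unfold IsDescent
  rw [hinv, hinv]
  rcases Nat.eq_zero_or_pos a with rfl | ha
  · have h₁ : sB 0 1 = -1 := by simp [sB_apply]
    have h₀ : sB 0 0 = 0 := by simp [sB_apply]
    simp only [Nat.cast_zero, zero_add, h₁, h₀, (odd_inv hw).map_zero] at hne ⊢
    rw [odd_inv hw 1]
    omega
  · have h₁ : sB a (a + 1) = a := by simp [sB_apply, ha.ne']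
    have h₀ : sB a a = a + 1 := by simp [sB_apply, ha.ne']
    rw [h₁, h₀]
    omega

theorem IsDescent.lt (hw : IsSignedPerm n w) (ha : IsDescent w a) : a < n := by
  by_contra! hna
  have h₁ : w⁻¹ (a + 1) = a + 1 := by
    rw [Equiv.Perm.inv_eq_iff_eq, hw.2]
    rw [abs_of_pos] <;> omega
  unfold IsDescent at ha
  rw [h₁] at ha
  have h₀ := hw.2 (w⁻¹ a) (by rw [abs_of_pos] <;> omega)
  have hK : w (w⁻¹ a) = a := by simp
  omega

theorem max_abs_apply_descentRoot (hw : Function.Odd w) (a : ℕ) :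
    max |w (descentRoot w a).1| |w (descentRoot w a).2| = a + 1 := by
  have hI : w (w⁻¹ (a + 1)) = a + 1 := by simp
  have hK : w (w⁻¹ a) = a := by simp
  unfold descentRoot root
  split_ifs with hpos hneg
  · rw [hI, hK, abs_of_nonneg, abs_of_nonneg] <;> omega
  · rw [hw, hw, hI, hK, abs_neg, abs_neg, abs_of_nonneg, abs_of_nonneg] <;> omega
  · have h := hw (w⁻¹ a)
    rw [show -w⁻¹ a = w⁻¹ (a + 1) by omega] at h
    omega

theorem descentRoot_injective (hw : Function.Odd w) : Function.Injective (descentRoot w) :=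
  fun a b h => by
    have ha := max_abs_apply_descentRoot hw a
    rw [h, max_abs_apply_descentRoot hw b] at ha
    omega

theorem exists_isDescent_of_apply_eq_add_one (hw : Function.Odd w) {i k : ℤ} (hik : i < k)
    (h : w i = w k + 1) : ∃ a, IsDescent w a ∧ descentRoot w a = root i k := by
  rcases le_or_gt 0 (w k) with hk | hk
  · obtain ⟨a, ha⟩ := Int.eq_ofNat_of_zero_le hk
    have hI : w⁻¹ (a + 1) = i := by rw [Equiv.Perm.inv_eq_iff_eq]; omega
    have hK : w⁻¹ a = k := by rw [Equiv.Perm.inv_eq_iff_eq]; omega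
    refine ⟨a, ?_, ?_⟩
    · rwa [IsDescent, hI, hK]
    · rw [descentRoot, hI, hK]
  · obtain ⟨a, ha⟩ := Int.eq_ofNat_of_zero_le (show 0 ≤ -w i by omega)
    have hI : w⁻¹ (a + 1) = -k := by rw [Equiv.Perm.inv_eq_iff_eq, hw]; omega
    have hK : w⁻¹ a = -i := by rw [Equiv.Perm.inv_eq_iff_eq, hw]; omega
    refine ⟨a, ?_, ?_⟩
    · rw [IsDescent, hI, hK]
      omega
    · rw [descentRoot, hI, hK, root_neg_neg]

theorem eq_one_of_strictMono (hw : Function.Odd w) (hmono : StrictMono w) : w = 1 := by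
  let e := hmono.orderIsoOfSurjective w w.surjective
  have hsucc (t : ℤ) : w (t + 1) = w t + 1 := e.map_succ t
  ext t
  induction t using Int.induction_on with
  | zero => exact hw.map_zero
  | succ t ih => rw [hsucc, ih]; rfl
  | pred t ih =>
    have h := hsucc (-t - 1)
    rw [sub_add_cancel, ih] at h
    simp only [Equiv.Perm.one_apply] at h ⊢
    omega

theorem exists_isDescent_of_ne_one (hw : Function.Odd w) (hne : w ≠ 1) : ∃ a, IsDescent w a := by
  by_contra! hno
  have hinv := odd_inv hw
  have hnat (a : ℕ) : w⁻¹ a < w⁻¹ (a + 1) :=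
    lt_of_le_of_ne (not_lt.1 (hno a)) (w⁻¹.injective.ne (by omega))
  refine hne (inv_eq_one.1 (eq_one_of_strictMono hinv (strictMono_int_of_lt_succ fun t => ?_)))
  rcases le_or_gt 0 t with ht | ht
  · lift t to ℕ using ht
    exact hnat t
  · have h := hnat (-t - 1).toNat
    rw [Int.toNat_of_nonneg (by omega), sub_add_cancel, show -t - 1 = -(t + 1) by ring, hinv,
      hinv] at h
    omega

theorem inversions_eq_empty_iff (hw : Function.Odd w) : inversions w = ∅ ↔ w = 1 := by
  refine ⟨fun h => ?_, fun h => h ▸ inversions_one⟩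
  by_contra hne
  obtain ⟨a, ha⟩ := exists_isDescent_of_ne_one hw hne
  exact Set.eq_empty_iff_forall_notMem.1 h _ (ha.descentRoot_mem_inversions hw)

end Descents

section ReducedWords

variable {n a : ℕ} {w : Equiv.Perm ℤ} {L : List ℕ}

theorem wordProd_cons (a : ℕ) (L : List ℕ) : wordProd (a :: L) = sB a * wordProd L := by
  simp [wordProd]

theorem isSignedPerm_wordProd (hL : ∀ a ∈ L, a < n) : IsSignedPerm n (wordProd L) := by
  induction L with
  | nil => exact isSignedPerm_one n
  | cons a L ih =>
    rw [List.forall_mem_cons] at hL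
    rw [wordProd_cons]
    exact (isSignedPerm_sB hL.1).mul (ih hL.2)

theorem IsDescent.isSignedPerm_sB_mul (hw : IsSignedPerm n w) (ha : IsDescent w a) :
    IsSignedPerm n (sB a * w) :=
  (isSignedPerm_sB (ha.lt hw)).mul hw

theorem IsDescent.ncard_inversions (hw : IsSignedPerm n w) (ha : IsDescent w a) :
    (inversions w).ncard = (inversions (sB a * w)).ncard + 1 := by
  rw [ha.inversions_eq_insert hw.1, Set.ncard_insert_of_notMem
    (ha.descentRoot_notMem_inversions hw.1) (ha.isSignedPerm_sB_mul hw).finite_inversions]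

theorem ncard_inversions_sB_mul_le (hw : IsSignedPerm n w) (han : a < n) :
    (inversions (sB a * w)).ncard ≤ (inversions w).ncard + 1 := by
  rcases isDescent_or_isDescent_sB_mul hw.1 a with ha | ha
  · have h := ha.ncard_inversions hw
    omega
  · rw [ha.ncard_inversions ((isSignedPerm_sB han).mul hw), sB_mul_cancel_left]

theorem ncard_inversions_wordProd_le (hL : ∀ a ∈ L, a < n) :
    (inversions (wordProd L)).ncard ≤ L.length := by
  induction L with
  | nil => exact (congrArg Set.ncard inversions_one).trans_le (Set.ncard_empty _).le
  | cons a L ih =>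
    rw [List.forall_mem_cons] at hL
    rw [wordProd_cons, List.length_cons]
    have h := ncard_inversions_sB_mul_le (isSignedPerm_wordProd hL.2) hL.1
    have hih := ih hL.2
    omega

theorem exists_word_length_eq_ncard_inversions (hw : IsSignedPerm n w) :
    ∃ L : List ℕ, (∀ a ∈ L, a < n) ∧ wordProd L = w ∧ L.length = (inversions w).ncard := by
  induction hm : (inversions w).ncard generalizing w with
  | zero =>
    rw [Set.ncard_eq_zero hw.finite_inversions, inversions_eq_empty_iff hw.1] at hm
    exact ⟨[], by simp, hm.symm, rfl⟩
  | succ m ih =>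
    have hne : w ≠ 1 := by
      rintro rfl
      simp [inversions_one] at hm
    obtain ⟨a, ha⟩ := exists_isDescent_of_ne_one hw.1 hne
    have hcard := ha.ncard_inversions hw
    obtain ⟨L, hL, hprod, hlen⟩ := ih (ha.isSignedPerm_sB_mul hw) (by omega)
    refine ⟨a :: L, List.forall_mem_cons.2 ⟨ha.lt hw, hL⟩, ?_, by rw [List.length_cons, hlen]⟩
    rw [wordProd_cons, hprod, sB_mul_cancel_left]

theorem lengthB_eq_ncard_inversions (hw : IsSignedPerm n w) :
    lengthB n w = (inversions w).ncard := by
  refine IsLeast.csInf_eq ⟨exists_word_length_eq_ncard_inversions hw, ?_⟩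
  rintro _ ⟨L, hL, rfl, rfl⟩
  exact ncard_inversions_wordProd_le hL

theorem isReducedWord_iff (hw : IsSignedPerm n w) :
    IsReducedWord n w L ↔
      (∀ a ∈ L, a < n) ∧ wordProd L = w ∧ L.length = (inversions w).ncard := by
  rw [IsReducedWord, lengthB_eq_ncard_inversions hw]

theorem isReducedWord_nil_iff (hw : IsSignedPerm n w) : IsReducedWord n w [] ↔ w = 1 := by
  rw [isReducedWord_iff hw]
  refine ⟨fun h => h.2.1.symm, ?_⟩
  rintro rfl
  exact ⟨by simp, rfl, by simp [inversions_one]⟩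

theorem isReducedWord_cons_iff (hw : IsSignedPerm n w) :
    IsReducedWord n w (a :: L) ↔ IsDescent w a ∧ IsReducedWord n (sB a * w) L := by
  have hprod : wordProd (a :: L) = w ↔ wordProd L = sB a * w := by
    rw [wordProd_cons]
    constructor
    · rintro rfl
      rw [sB_mul_cancel_left]
    · intro h
      rw [h, sB_mul_cancel_left]
  rw [isReducedWord_iff hw, List.forall_mem_cons, hprod, List.length_cons]
  constructor
  · rintro ⟨⟨han, hL⟩, hprod, hlen⟩
    have hsigned := (isSignedPerm_sB han).mul hw
    have ha : IsDescent w a := (isDescent_or_isDescent_sB_mul hw.1 a).resolve_right fun ha => by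
      have hcard := ha.ncard_inversions hsigned
      rw [sB_mul_cancel_left, ← hprod] at hcard
      have hle := ncard_inversions_wordProd_le hL
      omega
    have hcard := ha.ncard_inversions hw
    exact ⟨ha, (isReducedWord_iff hsigned).2 ⟨hL, hprod, by omega⟩⟩
  · rintro ⟨ha, hred⟩
    obtain ⟨hL, hprod, hlen⟩ := (isReducedWord_iff (ha.isSignedPerm_sB_mul hw)).1 hred
    exact ⟨⟨ha.lt hw, hL⟩, hprod, by rw [hlen, ha.ncard_inversions hw]⟩

end ReducedWords

section BalancedLabellings

/-- The contribution of an intermediate position `i < j < k` to the balance condition at the root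
`e_k - e_i`: the number of inversions among `e_k - e_j` and `e_j - e_i`, which sum to that root,
carrying a label larger than that of `e_k - e_i`. -/
def numLarger (w : Equiv.Perm ℤ) (f : ℤ × ℤ → ℕ) (i k j : ℤ) : ℕ :=
  (if w k < w j ∧ f (root i k) < f (root j k) then 1 else 0) +
    if w j < w i ∧ f (root i k) < f (root i j) then 1 else 0

/-- `f` labels the inversions of `w` bijectively by `m, …, m + N - 1` (and is `0` elsewhere) in such
a way that, at each inversion, the number of larger labels over all decompositions into two roots
is the number of intermediate positions. -/
structure IsBalancedLabelling (w : Equiv.Perm ℤ) (m N : ℕ) (f : ℤ × ℤ → ℕ) : Prop where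
  bijOn : Set.BijOn f (inversions w) (Set.Ico m (m + N))
  eq_zero : ∀ q ∉ inversions w, f q = 0
  balanced : ∀ q ∈ inversions w,
    ∑ j ∈ Finset.Ioo q.1 q.2, numLarger w f q.1 q.2 j = (Finset.Ioo q.1 q.2).card

variable {w : Equiv.Perm ℤ} {m N : ℕ} {f : ℤ × ℤ → ℕ} {i k : ℤ}

theorem numLarger_neg (hw : Function.Odd w) (f : ℤ × ℤ → ℕ) (i k j : ℤ) :
    numLarger w f (-k) (-i) (-j) = numLarger w f i k j := by
  unfold numLarger
  simp only [root_neg_neg, hw i, hw j, hw k, neg_lt_neg_iff]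
  rw [add_comm]

theorem numLarger_le_one {j : ℤ} (hj : w k < w j → w i ≤ w j) : numLarger w f i k j ≤ 1 := by
  unfold numLarger
  split_ifs <;> omega

theorem IsBalancedLabelling.sum_numLarger (hw : Function.Odd w)
    (hf : IsBalancedLabelling w m N f) (hik : i < k) (hlt : w k < w i) (hne : i + k ≠ 0) :
    ∑ j ∈ Finset.Ioo i k, numLarger w f i k j = (Finset.Ioo i k).card := by
  rcases lt_or_gt_of_ne hne with hneg | hpos
  · have hmem : (-k, -i) ∈ inversions w :=
      ⟨show - -i < -k by omega, neg_lt_neg hik, by simp only [hw i, hw k]; omega⟩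
    have hcard : (Finset.Ioo (-k) (-i)).card = (Finset.Ioo i k).card := by
      simp only [Int.card_Ioo]
      omega
    rw [← hcard, ← hf.balanced _ hmem]
    refine Finset.sum_nbij' Neg.neg Neg.neg ?_ ?_ (fun j _ => neg_neg j) (fun j _ => neg_neg j)
      fun j _ => (numLarger_neg hw f i k j).symm
    all_goals
      intro j hj
      simp only [Finset.mem_Ioo] at hj ⊢
      omega
  · exact hf.balanced (i, k) ⟨show -k < i by omega, hik, hlt⟩

/-- A position contributing nothing must be compensated by one contributing twice. -/
theorem IsBalancedLabelling.exists_apply_between (hw : Function.Odd w)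
    (hf : IsBalancedLabelling w m N f) (hik : i < k) (hlt : w k < w i) (hne : i + k ≠ 0) {t : ℤ}
    (hit : i < t) (htk : t < k) (ht : numLarger w f i k t = 0) :
    ∃ j, i < j ∧ j < k ∧ w k < w j ∧ w j < w i := by
  by_contra! hno
  refine (Finset.sum_lt_sum (f := numLarger w f i k) (g := 1) (s := Finset.Ioo i k) ?_
    ⟨t, Finset.mem_Ioo.2 ⟨hit, htk⟩, ht.trans_lt one_pos⟩).ne ?_
  · intro j hj
    rw [Finset.mem_Ioo] at hj
    exact numLarger_le_one (hno j hj.1 hj.2)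
  · rw [hf.sum_numLarger hw hik hlt hne, Finset.card_eq_sum_ones]
    rfl

section Minimum

variable {x y : ℤ} (hmem : (x, y) ∈ inversions w)
  (hmin : ∀ q ∈ inversions w, q ≠ (x, y) → f (x, y) < f q)

include hmem hmin

theorem numLarger_of_forall_lt (hw : Function.Odd w) {j : ℤ} (hxj : x < j) (hjy : j < y) :
    numLarger w f x y j = (if w y < w j then 1 else 0) + if w j < w x then 1 else 0 := by
  have hneg : -y < x := hmem.1
  have hright : w y < w j → f (x, y) < f (root j y) := fun h => by
    refine hmin _ ((root_mem_inversions hw hjy).2 h) ?_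
    rw [root_eq_mk (by omega), Ne, Prod.mk.injEq]
    omega
  have hleft : w j < w x → f (x, y) < f (root x j) := fun h => by
    refine hmin _ ((root_mem_inversions hw hxj).2 h) ?_
    unfold root
    split_ifs <;> simp only [ne_eq, Prod.mk.injEq] <;> omega
  rw [numLarger, root_eq_mk hneg]
  simp only [and_iff_left_of_imp hright, and_iff_left_of_imp hleft]

variable (hw : Function.Odd w) (hf : IsBalancedLabelling w m N f)

include hw hf

theorem not_apply_between_of_mem_Ioo {t : ℤ} (hxt : x < t) (hty : t < y) :
    ¬ (w y < w t ∧ w t < w x) := by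
  have hlt : w y < w x := hmem.2.2
  intro ht
  have hsum := hf.balanced _ hmem
  rw [Finset.card_eq_sum_ones] at hsum
  have hle : ∀ j ∈ Finset.Ioo x y, 1 ≤ numLarger w f x y j := fun j hj => by
    rw [Finset.mem_Ioo] at hj
    rw [numLarger_of_forall_lt hmem hmin hw hj.1 hj.2]
    split_ifs <;> omega
  have h := (Finset.sum_eq_sum_iff_of_le hle).1 hsum.symm t (Finset.mem_Ioo.2 ⟨hxt, hty⟩)
  rw [numLarger_of_forall_lt hmem hmin hw hxt hty, if_pos ht.1, if_pos ht.2] at h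
  omega

theorem not_apply_between_of_right {t : ℤ} (hyt : y < t) : ¬ (w y < w t ∧ w t < w x) := by
  induction hn : (t - y).toNat using Nat.strong_induction_on generalizing t with
  | _ n ih =>
  intro ht
  have ⟨(hneg : -y < x), (hxy : x < y), _⟩ := hmem
  have hxt : root x t ≠ (x, y) := by
    rw [root_eq_mk (by omega), Ne, Prod.mk.injEq]
    omega
  have hlt := hmin _ ((root_mem_inversions hw (hxy.trans hyt)).2 ht.2) hxt
  have hzero : numLarger w f x t y = 0 := by
    rw [numLarger, root_eq_mk hneg, if_neg (by omega), if_neg (by omega)]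
  obtain ⟨j, hxj, hjt, hj⟩ :=
    hf.exists_apply_between hw (hxy.trans hyt) ht.2 (by omega) hxy hyt hzero
  rcases lt_trichotomy j y with hjy | rfl | hyj
  · exact not_apply_between_of_mem_Ioo hmem hmin hw hf hxj hjy ⟨by omega, hj.2⟩
  · omega
  · exact ih _ (by omega) hyj rfl ⟨by omega, hj.2⟩

theorem not_apply_between_of_left {t : ℤ} (htx : t < x) : ¬ (w y < w t ∧ w t < w x) := by
  induction hn : (x - t).toNat using Nat.strong_induction_on generalizing t with
  | _ n ih =>
  intro ht
  have ⟨(hneg : -y < x), (hxy : x < y), _⟩ := hmem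
  -- For `t = -y` the balance condition at `(t, y)` is unavailable, but then `w 0` lies between.
  have hty : t + y ≠ 0 := by
    intro hty
    have hwt : w t = -w y := by rw [← hw]; congr 1; omega
    have h0 := hw.map_zero
    rcases lt_trichotomy x 0 with hx | rfl | hx
    · exact not_apply_between_of_mem_Ioo hmem hmin hw hf hx (by omega) (by omega)
    · omega
    · exact ih _ (by omega) hx rfl (by omega)
  have hne : root t y ≠ (x, y) := by
    unfold root
    split_ifs <;> simp only [ne_eq, Prod.mk.injEq] <;> omega
  have hlt := hmin _ ((root_mem_inversions hw (htx.trans hxy)).2 ht.1) hne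
  have hzero : numLarger w f t y x = 0 := by
    rw [numLarger, root_eq_mk hneg, if_neg (by omega), if_neg (by omega)]
  obtain ⟨j, htj, hjy, hj⟩ :=
    hf.exists_apply_between hw (htx.trans hxy) ht.1 hty htx hxy hzero
  rcases lt_trichotomy j x with hjx | rfl | hxj
  · exact ih _ (by omega) hjx rfl ⟨hj.1, by omega⟩
  · omega
  · exact not_apply_between_of_mem_Ioo hmem hmin hw hf hxj hjy ⟨hj.1, by omega⟩

theorem apply_eq_add_one_of_forall_lt : w x = w y + 1 := by
  by_contra hne
  have hlt : w y < w x := hmem.2.2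
  obtain ⟨t, ht⟩ := w.surjective (w y + 1)
  have hbetween : w y < w t ∧ w t < w x := by omega
  rcases lt_trichotomy t x with htx | rfl | hxt
  · exact not_apply_between_of_left hmem hmin hw hf htx hbetween
  · omega
  rcases lt_trichotomy t y with hty | rfl | hyt
  · exact not_apply_between_of_mem_Ioo hmem hmin hw hf hxt hty hbetween
  · omega
  · exact not_apply_between_of_right hmem hmin hw hf hyt hbetween

end Minimum

end BalancedLabellings

section Peeling

variable {w : Equiv.Perm ℤ} {m N a : ℕ} {f : ℤ × ℤ → ℕ}

theorem IsDescent.apply_descentRoot (hw : Function.Odd w) (ha : IsDescent w a) :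
    w (descentRoot w a).1 = w (descentRoot w a).2 + 1 := by
  have hI : w (w⁻¹ (a + 1)) = a + 1 := by simp
  have hK : w (w⁻¹ a) = a := by simp
  have h := ha.descentRoot_mem_inversions hw
  unfold descentRoot root at h ⊢
  split_ifs at h ⊢ with hpos hneg
  · rw [hI, hK]
  · rw [hw, hw, hI, hK]
    ring
  · have h' := hw (w⁻¹ a)
    rw [show -w⁻¹ a = w⁻¹ (a + 1) by omega] at h'
    omega

theorem IsDescent.numLarger_sB_mul (hw : Function.Odd w) (ha : IsDescent w a) {i j k : ℤ}
    (hij : i < j) (hjk : j < k) (hne : root i k ≠ descentRoot w a)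
    (hle : f (descentRoot w a) ≤ f (root i k)) :
    numLarger (sB a * w) (Function.update f (descentRoot w a) 0) i k j = numLarger w f i k j := by
  have hiff (p : ℤ × ℤ) (lt : Prop) :
      ((lt ∧ p ≠ descentRoot w a) ∧ f (root i k) < Function.update f (descentRoot w a) 0 p) ↔
        lt ∧ f (root i k) < f p := by
    by_cases hp : p = descentRoot w a
    · simp [hp, hle.not_gt]
    · simp [hp]
  simp only [numLarger, ha.sB_mul_apply_lt_iff hw hij, ha.sB_mul_apply_lt_iff hw hjk,
    Function.update_of_ne hne, hiff]

theorem sum_numLarger_of_forall_lt (hw : Function.Odd w) {q : ℤ × ℤ} (hq : q ∈ inversions w)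
    (hmin : ∀ p ∈ inversions w, p ≠ q → f q < f p) (hadj : w q.1 = w q.2 + 1) :
    ∑ j ∈ Finset.Ioo q.1 q.2, numLarger w f q.1 q.2 j = (Finset.Ioo q.1 q.2).card := by
  rw [Finset.card_eq_sum_ones]
  refine Finset.sum_congr rfl fun j hj => ?_
  rw [Finset.mem_Ioo] at hj
  rw [numLarger_of_forall_lt hq hmin hw hj.1 hj.2]
  split_ifs <;> omega

theorem IsDescent.bijOn_update_iff (hw : Function.Odd w) (ha : IsDescent w a)
    (hm : f (descentRoot w a) = m) :
    Set.BijOn (Function.update f (descentRoot w a) 0) (inversions (sB a * w))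
        (Set.Ico (m + 1) (m + 1 + N)) ↔
      Set.BijOn f (inversions w) (Set.Ico m (m + (N + 1))) := by
  have hIco : Set.Ico m (m + (N + 1)) = insert m (Set.Ico (m + 1) (m + 1 + N)) := by
    ext t
    simp only [Set.mem_insert_iff, Set.mem_Ico]
    omega
  have hnotMem := ha.descentRoot_notMem_inversions hw
  have heqOn : Set.EqOn (Function.update f (descentRoot w a) 0) f (inversions (sB a * w)) :=
    fun q hq => Function.update_of_ne (ne_of_mem_of_not_mem hq hnotMem) _ _
  rw [ha.inversions_eq_insert hw, hIco, heqOn.bijOn_iff, ← hm]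
  exact (Set.BijOn.insert_iff hnotMem (by simp)).symm

theorem IsDescent.sum_numLarger_sB_mul (hw : Function.Odd w) (ha : IsDescent w a) {q : ℤ × ℤ}
    (hq : q ∈ inversions (sB a * w)) (hle : f (descentRoot w a) ≤ f q) :
    ∑ j ∈ Finset.Ioo q.1 q.2,
        numLarger (sB a * w) (Function.update f (descentRoot w a) 0) q.1 q.2 j =
      ∑ j ∈ Finset.Ioo q.1 q.2, numLarger w f q.1 q.2 j := by
  have hroot : root q.1 q.2 = q := root_eq_mk hq.1
  refine Finset.sum_congr rfl fun j hj => ?_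
  rw [Finset.mem_Ioo] at hj
  refine ha.numLarger_sB_mul hw hj.1 hj.2 ?_ (by rwa [hroot])
  rw [hroot]
  exact ne_of_mem_of_not_mem hq (ha.descentRoot_notMem_inversions hw)

/-- The smallest label never counts as larger than another, so deleting it affects no other balance
condition; its own condition holds because `w` takes adjacent values there. -/
theorem IsDescent.isBalancedLabelling_iff (hw : Function.Odd w) (ha : IsDescent w a)
    (hm : f (descentRoot w a) = m) :
    IsBalancedLabelling w m (N + 1) f ↔
      IsBalancedLabelling (sB a * w) (m + 1) N (Function.update f (descentRoot w a) 0) := by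
  have hmem := ha.descentRoot_mem_inversions hw
  have hbij := ha.bijOn_update_iff (N := N) hw hm
  have hzero : (∀ q ∉ inversions (sB a * w), Function.update f (descentRoot w a) 0 q = 0) ↔
      ∀ q ∉ inversions w, f q = 0 := by
    rw [ha.inversions_eq_insert hw]
    refine forall_congr' fun q => ?_
    by_cases hq : q = descentRoot w a <;> simp [hq]
  have hmin (hf : Set.BijOn f (inversions w) (Set.Ico m (m + (N + 1)))) :
      ∀ q ∈ inversions w, q ≠ descentRoot w a → f (descentRoot w a) < f q := fun q hq hne =>
    lt_of_bijOn_Ico hf hmem hm hq hne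
  have hsum (hf : Set.BijOn f (inversions w) (Set.Ico m (m + (N + 1)))) (q : ℤ × ℤ)
      (hq : q ∈ inversions (sB a * w)) := by
    obtain ⟨hq', hne⟩ := (ha.mem_inversions_sB_mul_iff hw).1 hq
    exact ha.sum_numLarger_sB_mul hw hq (hmin hf q hq' hne).le
  constructor
  · intro hf
    refine ⟨hbij.2 hf.bijOn, hzero.2 hf.eq_zero, fun q hq => ?_⟩
    rw [hsum hf.bijOn q hq]
    exact hf.balanced q ((ha.mem_inversions_sB_mul_iff hw).1 hq).1
  · intro hg
    have hf := hbij.1 hg.bijOn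
    refine ⟨hf, hzero.1 hg.eq_zero, fun q hq => ?_⟩
    by_cases hne : q = descentRoot w a
    · rw [hne]
      exact sum_numLarger_of_forall_lt hw hmem (hmin hf) (ha.apply_descentRoot hw)
    · have hq' := (ha.mem_inversions_sB_mul_iff hw).2 ⟨hq, hne⟩
      rw [← hsum hf q hq']
      exact hg.balanced q hq'

theorem isBalancedLabelling_zero_iff (hw : Function.Odd w) :
    IsBalancedLabelling w m 0 f ↔ w = 1 ∧ f = 0 := by
  constructor
  · intro hf
    have hempty : inversions w = ∅ := by simpa using hf.bijOn
    refine ⟨(inversions_eq_empty_iff hw).1 hempty, funext fun q => hf.eq_zero q ?_⟩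
    simp [hempty]
  · rintro ⟨rfl, rfl⟩
    constructor <;> simp [inversions_one]

theorem IsBalancedLabelling.exists_isDescent (hw : Function.Odd w)
    (hf : IsBalancedLabelling w m (N + 1) f) :
    ∃ a, IsDescent w a ∧ f (descentRoot w a) = m := by
  obtain ⟨⟨x, y⟩, hmem, hm⟩ := hf.bijOn.surjOn (show m ∈ Set.Ico m (m + (N + 1)) by simp)
  obtain ⟨a, ha, hroot⟩ := exists_isDescent_of_apply_eq_add_one hw hmem.2.1
    (apply_eq_add_one_of_forall_lt hmem
      (fun q hq hne => lt_of_bijOn_Ico hf.bijOn hmem hm hq hne) hw hf)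
  exact ⟨a, ha, by rw [hroot, root_eq_mk hmem.1, hm]⟩

end Peeling

section WordLabellings

/-- The labelling of the inversions of `w` by a word `a_1 a_2 ⋯`: the inversion lost on passing
from `s_{a_{t-1}} ⋯ s_{a_1} w` to `s_{a_t} ⋯ s_{a_1} w` is labelled `m + t - 1`. -/
def wordLabelling (w : Equiv.Perm ℤ) (m : ℕ) : List ℕ → ℤ × ℤ → ℕ
  | [] => 0
  | a :: L => Function.update (wordLabelling (sB a * w) (m + 1) L) (descentRoot w a) m

variable {w : Equiv.Perm ℤ} {n m N : ℕ} {f : ℤ × ℤ → ℕ} {L : List ℕ}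

theorem IsReducedWord.isBalancedLabelling (hw : IsSignedPerm n w) (hL : IsReducedWord n w L) :
    IsBalancedLabelling w m L.length (wordLabelling w m L) := by
  induction L generalizing w m with
  | nil => exact (isBalancedLabelling_zero_iff hw.1).2 ⟨(isReducedWord_nil_iff hw).1 hL, rfl⟩
  | cons a L ih =>
    obtain ⟨ha, hL⟩ := (isReducedWord_cons_iff hw).1 hL
    have htail := ih (m := m + 1) (ha.isSignedPerm_sB_mul hw) hL
    rw [List.length_cons, ha.isBalancedLabelling_iff hw.1 (by simp [wordLabelling]),
      wordLabelling, Function.update_idem, Function.update_eq_self_iff.2]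
    · exact htail
    · exact (htail.eq_zero _ (ha.descentRoot_notMem_inversions hw.1)).symm

theorem wordLabelling_cons_eq_iff (hw : IsSignedPerm n w) {a : ℕ}
    (hL : IsReducedWord n w (a :: L)) :
    wordLabelling w m (a :: L) = f ↔ f (descentRoot w a) = m ∧
      wordLabelling (sB a * w) (m + 1) L = Function.update f (descentRoot w a) 0 := by
  obtain ⟨ha, hL⟩ := (isReducedWord_cons_iff hw).1 hL
  have hzero := (hL.isBalancedLabelling (m := m + 1) (ha.isSignedPerm_sB_mul hw)).eq_zero _
    (ha.descentRoot_notMem_inversions hw.1)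
  rw [wordLabelling, Function.update_eq_iff, Function.eq_update_iff, eq_comm (a := m)]
  simp [hzero]

theorem IsBalancedLabelling.existsUnique_word (hw : IsSignedPerm n w)
    (hf : IsBalancedLabelling w m N f) :
    ∃! L, IsReducedWord n w L ∧ wordLabelling w m L = f := by
  induction N generalizing w m f with
  | zero =>
    obtain ⟨rfl, rfl⟩ := (isBalancedLabelling_zero_iff hw.1).1 hf
    refine ⟨[], ⟨(isReducedWord_nil_iff hw).2 rfl, rfl⟩, fun L hL => ?_⟩
    rw [← List.length_eq_zero_iff, ((isReducedWord_iff hw).1 hL.1).2.2, inversions_one,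
      Set.ncard_empty]
  | succ N ih =>
    obtain ⟨a, ha, hm⟩ := hf.exists_isDescent hw.1
    obtain ⟨L, ⟨hL, hlabel⟩, huniq⟩ :=
      ih (ha.isSignedPerm_sB_mul hw) ((ha.isBalancedLabelling_iff hw.1 hm).1 hf)
    have haL : IsReducedWord n w (a :: L) := (isReducedWord_cons_iff hw).2 ⟨ha, hL⟩
    refine ⟨a :: L, ⟨haL, (wordLabelling_cons_eq_iff hw haL).2 ⟨hm, hlabel⟩⟩, ?_⟩
    rintro (_ | ⟨b, L'⟩) ⟨hL', hlabel'⟩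
    · rw [isReducedWord_nil_iff hw, ← inversions_eq_empty_iff hw.1] at hL'
      exact absurd (ha.descentRoot_mem_inversions hw.1) (by simp [hL'])
    · obtain ⟨hb, htail⟩ := (isReducedWord_cons_iff hw).1 hL'
      rw [wordLabelling_cons_eq_iff hw hL'] at hlabel'
      obtain rfl : b = a := descentRoot_injective hw.1 <| hf.bijOn.injOn
        (hb.descentRoot_mem_inversions hw.1) (ha.descentRoot_mem_inversions hw.1)
        (hlabel'.1.trans hm.symm)
      rw [huniq L' ⟨htail, hlabel'.2⟩]

theorem card_isBalancedLabelling_eq_card_isReducedWord (hw : IsSignedPerm n w) :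
    Nat.card {f // IsBalancedLabelling w m (inversions w).ncard f} =
      Nat.card {L // IsReducedWord n w L} := by
  have hlen {L : List ℕ} (hL : IsReducedWord n w L) : L.length = (inversions w).ncard :=
    ((isReducedWord_iff hw).1 hL).2.2
  refine (Nat.card_eq_of_bijective (fun L : {L // IsReducedWord n w L} =>
    (⟨wordLabelling w m L.1, hlen L.2 ▸ L.2.isBalancedLabelling hw⟩ :
      {f // IsBalancedLabelling w m (inversions w).ncard f})) ?_).symm
  rw [Function.bijective_iff_existsUnique]
  rintro ⟨f, hf⟩
  obtain ⟨L, ⟨hL, hlabel⟩, huniq⟩ := hf.existsUnique_word hw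
  exact ⟨⟨L, hL⟩, Subtype.ext hlabel, fun L' hL' =>
    Subtype.ext (huniq L'.1 ⟨L'.2, congrArg Subtype.val hL'⟩)⟩

end WordLabellings

section Hooks

variable {d : ℕ} {lam : ℕ → ℕ} {i c : ℤ}

theorem ncard_diagram (d : ℕ) (lam : ℕ → ℕ) : (Diagram d lam).ncard = sizeP d lam := by
  have hbij : Set.BijOn (fun s : (_ : ℕ) × ℕ => ((s.1 : ℤ), (s.1 : ℤ) - d + s.2))
      ((Finset.Icc 1 d).sigma fun i => Finset.range (lam i)) (Diagram d lam) := by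
    refine Set.InvOn.bijOn (f' := fun p => ⟨p.1.toNat, (p.2 - p.1 + d).toNat⟩) ⟨?_, ?_⟩ ?_ ?_
    · rintro ⟨i, j⟩ -
      have hj : ((i : ℤ) - d + j - i + d).toNat = j := by omega
      simp [hj]
    · rintro ⟨i, c⟩ ⟨hi, -, hci, -⟩
      simp only [Prod.mk.injEq]
      omega
    · rintro ⟨i, j⟩ hij
      simp only [Finset.coe_sigma, Set.mem_sigma_iff, Finset.mem_coe, Finset.mem_Icc,
        Finset.mem_range] at hij
      simp only [Diagram, Set.mem_ofPred_eq, Int.toNat_natCast]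
      omega
    · rintro ⟨i, c⟩ hic
      simp only [Diagram, Set.mem_ofPred_eq] at hic
      simp only [Finset.coe_sigma, Set.mem_sigma_iff, Finset.mem_coe, Finset.mem_Icc,
        Finset.mem_range]
      omega
  rw [← hbij.ncard_eq, Set.ncard_coe_finset, Finset.card_sigma, sizeP]
  simp

/-- The arm of the box `(i, c)`: the boxes to its right. -/
def arm (d : ℕ) (lam : ℕ → ℕ) (i c : ℤ) : Set (ℤ × ℤ) :=
  {p ∈ Diagram d lam | p.1 = i ∧ c < p.2}

/-- The extended leg of the box `(i, c)`: the boxes below it and, if `c < 0`, the row `d + 1 + c`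
of the extended diagram. -/
def extLeg (d : ℕ) (lam : ℕ → ℕ) (i c : ℤ) : Set (ℤ × ℤ) :=
  {p ∈ Diagram d lam | p.2 = c ∧ i < p.1 ∨ c < 0 ∧ p.1 = d + 1 + c} ∪
    {p | c < 0 ∧ p = (d + 1 + c, c)}

theorem extHook_eq_insert (d : ℕ) (lam : ℕ → ℕ) (i c : ℤ) :
    ExtHook d lam i c = insert (i, c) (arm d lam i c ∪ extLeg d lam i c) := by
  ext p
  simp only [ExtHook, Hook, arm, extLeg, Set.mem_union, Set.mem_insert_iff, Set.mem_singleton_iff,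
    Set.mem_ofPred_eq]
  tauto

theorem extFilling_of_mem_diagram (B : ℤ × ℤ → ℕ) {p : ℤ × ℤ} (hp : p ∈ Diagram d lam) :
    ExtFilling d B p = B p :=
  if_neg (by have := hp.2.2.1; omega)

theorem disjoint_arm_extLeg (h : (i, c) ∈ Diagram d lam) :
    Disjoint (arm d lam i c) (extLeg d lam i c) := by
  obtain ⟨-, -, hci, -⟩ := h
  rw [Set.disjoint_left]
  rintro p ⟨-, rfl, -⟩ (⟨-, hp⟩ | ⟨-, rfl⟩)
  · omega
  · simp only at hci
    omega

theorem ncard_lt_extFilling_extHook (B : ℤ × ℤ → ℕ) {p : ℤ × ℤ} (hp : p ∈ Diagram d lam)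
    (harm : (arm d lam p.1 p.2).Finite) (hleg : (extLeg d lam p.1 p.2).Finite) :
    {q ∈ ExtHook d lam p.1 p.2 | B p < ExtFilling d B q}.ncard =
      {q ∈ arm d lam p.1 p.2 | B p < ExtFilling d B q}.ncard +
        {q ∈ extLeg d lam p.1 p.2 | B p < ExtFilling d B q}.ncard := by
  rw [← Set.ncard_union_eq _ (harm.subset (Set.sep_subset _ _)) (hleg.subset (Set.sep_subset _ _))]
  · congr 1
    ext q
    simp only [extHook_eq_insert, Set.mem_ofPred_eq, Set.mem_insert_iff, Set.mem_union]
    constructor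
    · rintro ⟨rfl | hq | hq, hlt⟩
      · rw [extFilling_of_mem_diagram B hp] at hlt
        exact absurd hlt (lt_irrefl _)
      · exact Or.inl ⟨hq, hlt⟩
      · exact Or.inr ⟨hq, hlt⟩
    · tauto
  · exact (disjoint_arm_extLeg hp).mono (Set.sep_subset _ _) (Set.sep_subset _ _)

end Hooks

section Trapezoid

variable {d r : ℕ} {w : Equiv.Perm ℤ} {B f : ℤ × ℤ → ℕ}

theorem mem_diagram_Zlam {p : ℤ × ℤ} : p ∈ Diagram d (Zlam d r) ↔
    1 ≤ p.1 ∧ p.1 ≤ d ∧ p.1 - d ≤ p.2 ∧ p.2 ≤ r + d - p.1 := by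
  unfold Diagram Zlam
  rw [Set.mem_ofPred_eq]
  omega

theorem IsWdr.mem_inversions_iff (hw : IsWdr d r w) {q : ℤ × ℤ} :
    q ∈ inversions w ↔
      r < q.2 ∧ q.2 ≤ d + r ∧ q.1 < q.2 ∧ (0 ≤ q.1 ∨ -q.2 < q.1 ∧ q.1 < -r) := by
  obtain ⟨⟨hodd, hfix⟩, hsmall, hlarge⟩ := hw
  have hfix' (t : ℤ) (ht : (d : ℤ) + r < t) : w t = t := hfix t (by rw [lt_abs]; push_cast; omega)
  obtain ⟨x, y⟩ := q
  have h0 : x = 0 → w x = 0 := by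
    rintro rfl
    exact Function.Odd.map_zero hodd
  have hx := hodd x
  have := hsmall x
  have := hlarge x
  have := hfix' x
  have := hsmall (-x)
  have := hlarge (-x)
  have := hfix' (-x)
  have := hsmall y
  have := hlarge y
  have := hfix' y
  simp only [inversions, Set.mem_ofPred_eq]
  constructor <;> intro h <;> omega

/-- The box of the trapezoid `Z(d, r)` corresponding to an inversion `q` of `w = w^{(d,r)}`: its
label under `fLabel` is `-w α`, where `α` is the root encoded by `q`. -/
def boxOf (d r : ℕ) (q : ℤ × ℤ) : ℤ × ℤ :=
  (d + r + 1 - q.2, if q.1 < 0 then q.1 + r else q.1)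

/-- The inversion of `w^{(d,r)}` corresponding to a box of the trapezoid `Z(d, r)`. -/
def inversionOf (d r : ℕ) (p : ℤ × ℤ) : ℤ × ℤ :=
  (if p.2 < 0 then p.2 - r else p.2, d + r + 1 - p.1)

theorem IsWdr.boxOf_mem (hw : IsWdr d r w) {q : ℤ × ℤ} (hq : q ∈ inversions w) :
    boxOf d r q ∈ Diagram d (Zlam d r) := by
  rw [hw.mem_inversions_iff] at hq
  rw [mem_diagram_Zlam, boxOf]
  split_ifs <;> simp only <;> omega

theorem IsWdr.inversionOf_mem (hw : IsWdr d r w) {p : ℤ × ℤ} (hp : p ∈ Diagram d (Zlam d r)) :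
    inversionOf d r p ∈ inversions w := by
  rw [mem_diagram_Zlam] at hp
  rw [hw.mem_inversions_iff, inversionOf]
  split_ifs <;> simp only <;> omega

theorem IsWdr.inversionOf_boxOf (hw : IsWdr d r w) {q : ℤ × ℤ} (hq : q ∈ inversions w) :
    inversionOf d r (boxOf d r q) = q := by
  rw [hw.mem_inversions_iff] at hq
  refine Prod.ext ?_ (by simp only [boxOf, inversionOf]; ring)
  simp only [boxOf, inversionOf]
  split_ifs <;> omega

theorem boxOf_inversionOf (p : ℤ × ℤ) : boxOf d r (inversionOf d r p) = p := by
  refine Prod.ext (by simp only [boxOf, inversionOf]; ring) ?_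
  simp only [boxOf, inversionOf]
  split_ifs <;> omega

theorem IsWdr.bijOn_boxOf (hw : IsWdr d r w) :
    Set.BijOn (boxOf d r) (inversions w) (Diagram d (Zlam d r)) :=
  Set.InvOn.bijOn ⟨fun _ => hw.inversionOf_boxOf, fun p _ => boxOf_inversionOf p⟩
    (fun _ => hw.boxOf_mem) fun _ => hw.inversionOf_mem

theorem IsWdr.ncard_inversions (hw : IsWdr d r w) :
    (inversions w).ncard = sizeP d (Zlam d r) := by
  rw [hw.bijOn_boxOf.ncard_eq, ncard_diagram]

/-- The box of the extended trapezoid corresponding to the root `e_k - e_i`. The multiples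
`2 e_k` (for `i = -k`) correspond to the additional boxes, as under `fExtLabel`. -/
def extBox (d r : ℕ) (i k : ℤ) : ℤ × ℤ :=
  if i + k < 0 then boxOf d r (-k, -i) else boxOf d r (i, k)

theorem IsWdr.extFilling_extBox (hw : IsWdr d r w) {i k : ℤ} (hik : i < k) (hlt : w k < w i) :
    ExtFilling d B (extBox d r i k) = B (boxOf d r (root i k)) := by
  have hmem := (root_mem_inversions hw.1.1 hik).2 hlt
  rcases eq_or_ne (i + k) 0 with hzero | hne
  · obtain rfl : i = -k := by omega
    have hroot : root (-k) k = (0, k) := by simp [root]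
    rw [hroot, hw.mem_inversions_iff] at hmem
    have hbox : extBox d r (-k) k = (d + r + 1 - k, -k + r) := by
      rw [extBox, if_neg (by omega), boxOf, if_pos (by simp only; omega)]
    rw [hbox, hroot, ExtFilling, if_pos (by simp only; ring)]
    rfl
  · have hbox : extBox d r i k = boxOf d r (root i k) := by
      unfold extBox root
      split_ifs <;> first | rfl | omega
    rw [hbox, extFilling_of_mem_diagram B (hw.boxOf_mem hmem)]

section Inversion

variable (hw : IsWdr d r w) {x y : ℤ} (hxy : (x, y) ∈ inversions w)

include hw hxy

theorem IsWdr.apply_right_lt_apply_iff {j : ℤ} (hxj : x < j) (hjy : j < y) :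
    w y < w j ↔ 0 ≤ j ∨ j < -r := by
  rw [hw.mem_inversions_iff] at hxy
  rw [← root_mem_inversions hw.1.1 hjy, root_eq_mk (by omega), hw.mem_inversions_iff]
  omega

theorem IsWdr.apply_lt_apply_left_iff {j : ℤ} (hxj : x < j) (hjy : j < y) :
    w j < w x ↔ x < -r ∧ j ≤ 0 ∨ r < j := by
  rw [hw.mem_inversions_iff] at hxy
  rw [← root_mem_inversions hw.1.1 hxj, hw.mem_inversions_iff]
  unfold root
  split_ifs <;> simp only <;> omega

theorem IsWdr.bijOn_arm :
    Set.BijOn (fun j => extBox d r j y) {j ∈ Set.Ioo x y | w y < w j}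
      (arm d (Zlam d r) (boxOf d r (x, y)).1 (boxOf d r (x, y)).2) := by
  have hinv {j : ℤ} := hw.apply_right_lt_apply_iff hxy (j := j)
  rw [hw.mem_inversions_iff] at hxy
  have hbox {j : ℤ} (hxj : x < j) : extBox d r j y = boxOf d r (j, y) := if_neg (by omega)
  refine Set.InvOn.bijOn (f' := fun p => (inversionOf d r p).1) ⟨?_, ?_⟩ ?_ ?_
  · rintro j ⟨⟨hxj, hjy⟩, hj⟩
    rw [hinv hxj hjy] at hj
    simp only [hbox hxj, boxOf, inversionOf]
    split_ifs <;> omega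
  · rintro p ⟨hp, hrow, hcol⟩
    rw [mem_diagram_Zlam] at hp
    simp only [boxOf] at hrow hcol
    have hxj : x < (inversionOf d r p).1 := by
      simp only [inversionOf]
      split_ifs at * <;> omega
    have hy : y = (inversionOf d r p).2 := by simp only [inversionOf]; omega
    simp only [hbox hxj]
    rw [hy, Prod.mk.eta, boxOf_inversionOf]
  · rintro j ⟨⟨hxj, hjy⟩, hj⟩
    rw [hinv hxj hjy] at hj
    simp only [hbox hxj, arm, Set.mem_ofPred_eq, mem_diagram_Zlam, boxOf, true_and]
    split_ifs <;> omega
  · rintro p ⟨hp, hrow, hcol⟩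
    rw [mem_diagram_Zlam] at hp
    simp only [boxOf] at hrow hcol
    have hj : (inversionOf d r p).1 ∈ Set.Ioo x y := by
      simp only [inversionOf, Set.mem_Ioo]
      split_ifs at * <;> omega
    refine ⟨hj, (hinv hj.1 hj.2).2 ?_⟩
    simp only [inversionOf]
    split_ifs <;> omega

theorem IsWdr.bijOn_extLeg :
    Set.BijOn (fun j => extBox d r x j) {j ∈ Set.Ioo x y | w j < w x}
      (extLeg d (Zlam d r) (boxOf d r (x, y)).1 (boxOf d r (x, y)).2) := by
  have hinv {j : ℤ} := hw.apply_lt_apply_left_iff hxy (j := j)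
  rw [hw.mem_inversions_iff] at hxy
  refine Set.InvOn.bijOn (f' := fun p => if p.2 = (boxOf d r (x, y)).2 then d + r + 1 - p.1
    else -(inversionOf d r p).1) ⟨?_, ?_⟩ ?_ ?_
  · rintro j ⟨⟨hxj, hjy⟩, hj⟩
    rw [hinv hxj hjy] at hj
    rcases lt_or_ge (x + j) 0 with hneg | hnonneg
    · simp only [extBox, if_pos hneg, boxOf, inversionOf]
      split_ifs <;> omega
    · simp only [extBox, if_neg hnonneg.not_gt, boxOf, if_true]
      ring
  · rintro ⟨p₁, p₂⟩ hp
    simp only [extLeg, boxOf, Set.mem_union, Set.mem_ofPred_eq, mem_diagram_Zlam, Prod.mk.injEq]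
      at hp
    refine Prod.ext ?_ ?_ <;> simp only [extBox, boxOf, inversionOf] <;> split_ifs at * <;>
      simp only at * <;> omega
  · rintro j ⟨⟨hxj, hjy⟩, hj⟩
    rw [hinv hxj hjy] at hj
    simp only [extLeg, Set.mem_union, Set.mem_ofPred_eq, mem_diagram_Zlam]
    rcases lt_or_ge (x + j) 0 with hneg | hnonneg
    · simp only [extBox, if_pos hneg, boxOf, Prod.mk.injEq]
      split_ifs <;> omega
    · simp only [extBox, if_neg hnonneg.not_gt, boxOf, Prod.mk.injEq, true_and, and_true]
      split_ifs <;> omega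
  · rintro ⟨p₁, p₂⟩ hp
    simp only [extLeg, boxOf, Set.mem_union, Set.mem_ofPred_eq, mem_diagram_Zlam, Prod.mk.injEq]
      at hp
    have hj : (if p₂ = (boxOf d r (x, y)).2 then d + r + 1 - p₁
        else -(inversionOf d r (p₁, p₂)).1) ∈ Set.Ioo x y := by
      simp only [boxOf, inversionOf, Set.mem_Ioo]
      split_ifs at * <;> omega
    refine ⟨hj, (hinv hj.1 hj.2).2 ?_⟩
    simp only [boxOf, inversionOf]
    split_ifs at * <;> omega

/-- Under `boxOf`, the pairs of roots summing to that of `(x, y)` become the extended hook. -/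
theorem IsWdr.ncard_lt_extFilling_extHook_boxOf
    (hB : ∀ q ∈ inversions w, f q = B (boxOf d r q)) :
    {s ∈ ExtHook d (Zlam d r) (boxOf d r (x, y)).1 (boxOf d r (x, y)).2 |
      B (boxOf d r (x, y)) < ExtFilling d B s}.ncard =
    ∑ j ∈ Finset.Ioo x y, numLarger w f x y j := by
  have harm := hw.bijOn_arm hxy
  have hleg := hw.bijOn_extLeg hxy
  have hfin (P : ℤ → Prop) : {j ∈ Set.Ioo x y | P j}.Finite :=
    (Set.finite_Ioo x y).subset (Set.sep_subset _ _)
  have hext {i k : ℤ} (hik : i < k) (hlt : w k < w i) :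
      ExtFilling d B (extBox d r i k) = f (root i k) := by
    rw [hw.extFilling_extBox hik hlt, hB _ ((root_mem_inversions hw.1.1 hik).2 hlt)]
  rw [ncard_lt_extFilling_extHook B (hw.boxOf_mem hxy) (harm.finite_iff_finite.1 (hfin _))
      (hleg.finite_iff_finite.1 (hfin _)), ncard_sep_of_bijOn harm, ncard_sep_of_bijOn hleg,
    ← hB _ hxy, ← root_eq_mk hxy.1]
  simp only [numLarger, Finset.sum_add_distrib, ← Finset.card_filter, ← Set.ncard_coe_finset]
  congr 2
  · ext j
    simp only [Set.mem_ofPred_eq, Set.mem_Ioo, Finset.coe_filter, Finset.mem_Ioo, and_assoc]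
    refine and_congr_right fun _ => and_congr_right fun hjy => and_congr_right fun hlt => ?_
    rw [hext hjy hlt]
  · ext j
    simp only [Set.mem_ofPred_eq, Set.mem_Ioo, Finset.coe_filter, Finset.mem_Ioo, and_assoc]
    refine and_congr_right fun hxj => and_congr_right fun _ => and_congr_right fun hlt => ?_
    rw [hext hxj hlt]

theorem IsWdr.rk_boxOf_sub_one :
    rk d (Zlam d r) (boxOf d r (x, y)).1 (boxOf d r (x, y)).2 - 1 = (Finset.Ioo x y).card := by
  rw [hw.mem_inversions_iff] at hxy
  simp only [Int.card_Ioo, rk, Zlam, boxOf]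
  split_ifs <;> omega

end Inversion

theorem IsWdr.isBalanced_iff (hw : IsWdr d r w) (hB : ∀ q ∈ inversions w, f q = B (boxOf d r q))
    (hBzero : ∀ p ∉ Diagram d (Zlam d r), B p = 0) (hfzero : ∀ q ∉ inversions w, f q = 0) :
    IsBalanced d (Zlam d r) B ↔ IsBalancedLabelling w 1 (inversions w).ncard f := by
  have hbij : Set.BijOn B (Diagram d (Zlam d r)) (Set.Icc 1 (sizeP d (Zlam d r))) ↔
      Set.BijOn f (inversions w) (Set.Ico 1 (1 + (inversions w).ncard)) := by
    rw [hw.ncard_inversions, add_comm 1, Set.Ico_add_one_right_eq_Icc, Set.EqOn.bijOn_iff hB,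
      ← hw.bijOn_boxOf.image_eq]
    exact (Set.bijOn_comp_iff hw.bijOn_boxOf.injOn).symm
  have hbal : (∀ p ∈ Diagram d (Zlam d r),
      ({s ∈ ExtHook d (Zlam d r) p.1 p.2 | B p < ExtFilling d B s}.ncard : ℤ) =
        rk d (Zlam d r) p.1 p.2 - 1) ↔
      ∀ q ∈ inversions w,
        ∑ j ∈ Finset.Ioo q.1 q.2, numLarger w f q.1 q.2 j = (Finset.Ioo q.1 q.2).card := by
    rw [hw.bijOn_boxOf.forall]
    refine forall₂_congr fun q hq => ?_
    rw [hw.ncard_lt_extFilling_extHook_boxOf hq hB, hw.rk_boxOf_sub_one hq, Nat.cast_inj]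
  rw [IsBalanced, IsFilling, hbij, hbal]
  exact ⟨fun h => ⟨h.1.1, hfzero, h.2⟩, fun h => ⟨⟨h.1, hBzero⟩, h.3⟩⟩

theorem IsWdr.card_isBalanced (hw : IsWdr d r w) :
    Nat.card {B : ℤ × ℤ → ℕ // IsBalanced d (Zlam d r) B} =
      Nat.card {f : ℤ × ℤ → ℕ // IsBalancedLabelling w 1 (inversions w).ncard f} := by
  have hlabel (B : ℤ × ℤ → ℕ) (hB : ∀ p ∉ Diagram d (Zlam d r), B p = 0) :
      IsBalanced d (Zlam d r) B ↔ IsBalancedLabelling w 1 (inversions w).ncard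
        ((inversions w).indicator (B ∘ boxOf d r)) :=
    hw.isBalanced_iff (fun _ hq => Set.indicator_of_mem hq _) hB
      fun _ hq => Set.indicator_of_notMem hq _
  have hleft (B : {B // IsBalanced d (Zlam d r) B}) := indicator_comp_indicator_comp
    (fun _ => hw.inversionOf_mem) (fun p _ => boxOf_inversionOf p) B.2.1.2
  have hright (f : {f // IsBalancedLabelling w 1 (inversions w).ncard f}) :=
    indicator_comp_indicator_comp (fun _ => hw.boxOf_mem) (fun _ => hw.inversionOf_boxOf)
      f.2.eq_zero
  refine Nat.card_congr ⟨fun B => ⟨_, (hlabel B.1 B.2.1.2).1 B.2⟩, fun f =>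
    ⟨(Diagram d (Zlam d r)).indicator (f.1 ∘ inversionOf d r), ?_⟩,
    fun B => Subtype.ext (hleft B), fun f => Subtype.ext (hright f)⟩
  rw [hlabel _ fun _ hp => Set.indicator_of_notMem hp _, hright f]
  exact f.2

end Trapezoid

/-- `|BS(Z(d,r))| = |Red(w^{(d,r)})|`. -/
theorem bst_card_eq_red_card (d r : ℕ) (hd : 1 ≤ d)
    (w : Equiv.Perm ℤ) (hw : IsWdr d r w) :
    Nat.card {B : ℤ × ℤ → ℕ // IsBalanced d (Zlam d r) B} =
      Nat.card {L : List ℕ // IsReducedWord (d + r) w L} := by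
  rw [hw.card_isBalanced]
  exact card_isBalancedLabelling_eq_card_isReducedWord hw.1

end BST
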